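/- Let β be continuous, bounded, nonnegative, with ψ(t) = e^{−∫₀^t β} satisfying ψ(t) = Ψ t^{−α} + O(t^{−α−δ}) (Ψ > 0, α ∈ (0,1), δ ∈ (0,1−α)). Let N : [0,∞) → [0,∞) be continuous and bounded with (ψ * N)(t) → L as t → ∞ for some L ≥ 0. Then for every μ > 1−α, (N * Y_μ)(t) ~ (L/(Ψ Γ(1−α))) Y_{μ+α}(t) as t → ∞. -/

import Mathlib

open MeasureTheory intervalIntegral Real Set Filter
noncomputable def Y (ν t : ℝ) : ℝ := t ^ (ν - 1) / Real.Gamma ν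

lemma beta_scaled (a b r : ℝ) (ha : 0 < a) (hb : 0 < b) (hr : 0 < r) :
    ∫ s in (0:ℝ)..r, s ^ (a - 1) * (r - s) ^ (b - 1) = r ^ (a + b - 1) * ProbabilityTheory.beta a b := by
  have h := Complex.betaIntegral_scaled (a : ℂ) (b : ℂ) hr
  rw [Complex.betaIntegral_eq_Gamma_mul_div _ _ (by simpa) (by simpa)] at h
  apply Complex.ofReal_injective
  rw [← intervalIntegral.integral_ofReal]
  have e : ∫ s in (0:ℝ)..r, ((s ^ (a - 1) * (r - s) ^ (b - 1) : ℝ) : ℂ)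
      = ∫ x in (0:ℝ)..r, (x:ℂ) ^ ((a:ℂ) - 1) * ((r:ℂ) - x) ^ ((b:ℂ) - 1) := by
    apply intervalIntegral.integral_congr
    intro x hx
    rw [uIcc_of_le hr.le] at hx
    simp only
    rw [Complex.ofReal_mul, Complex.ofReal_cpow hx.1, Complex.ofReal_cpow (by linarith [hx.2])]
    push_cast
    rfl
  rw [e, h, ProbabilityTheory.beta, Complex.ofReal_mul, Complex.ofReal_cpow hr.le]
  push_cast
  rw [← Complex.Gamma_ofReal, ← Complex.Gamma_ofReal, ← Complex.Gamma_ofReal]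
  push_cast
  rfl

lemma beta_integrable (a b r : ℝ) (ha : 0 < a) (hb : 0 < b) (hr : 0 < r) :
    IntervalIntegrable (fun s => s ^ (a - 1) * (r - s) ^ (b - 1)) volume 0 r := by
  apply intervalIntegral.intervalIntegrable_of_integral_ne_zero
  rw [beta_scaled a b r ha hb hr]
  exact (mul_pos (rpow_pos_of_pos hr _) (ProbabilityTheory.beta_pos ha hb)).ne'

lemma sub_rpow_integrable (κ r a b : ℝ) (hκ : -1 < κ) :
    IntervalIntegrable (fun s => (r - s) ^ κ) volume a b := by
  have := (intervalIntegral.intervalIntegrable_rpow' (a := r - a) (b := r - b) hκ).comp_sub_left r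
  simpa using this

lemma T1 (g : ℝ → ℝ) (hg : Continuous g) (L : ℝ) (hL : Tendsto g atTop (nhds L)) (ν : ℝ) (hν : 0 < ν) :
    Tendsto (fun t => (∫ u in (0:ℝ)..t, g u * (t - u) ^ (ν - 1)) / t ^ ν) atTop (nhds (L / ν)) := by
  obtain ⟨M, hM⟩ : ∃ M, ∀ u, 0 ≤ u → |g u| ≤ M := by
    have h1 : ∀ᶠ u in atTop, |g u| ≤ |L| + 1 := by
      have := hL.abs.eventually (gt_mem_nhds (show |L| < |L| + 1 by linarith))
      exact this.mono fun u hu => hu.le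
    obtain ⟨T, hT⟩ := eventually_atTop.1 h1
    obtain ⟨C, hC⟩ := (isCompact_Icc (a := (0:ℝ)) (b := T)).exists_bound_of_continuousOn hg.continuousOn
    refine ⟨max C (|L| + 1), fun u hu => ?_⟩
    rcases le_total u T with h | h
    · exact (hC u ⟨hu, h⟩).trans (le_max_left _ _)
    · exact (hT u h).trans (le_max_right _ _)
  have key : Tendsto (fun t => ∫ x in (0:ℝ)..1, g (t * x) * (1 - x) ^ (ν - 1)) atTop
      (nhds (∫ x in (0:ℝ)..1, L * (1 - x) ^ (ν - 1))) := by
    apply intervalIntegral.tendsto_integral_filter_of_dominated_convergence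
      (fun x => M * (1 - x) ^ (ν - 1))
    · refine Eventually.of_forall fun t => Measurable.aestronglyMeasurable ?_
      have := hg.measurable
      fun_prop
    · filter_upwards [eventually_ge_atTop 0] with t ht
      refine Eventually.of_forall fun x hx => ?_
      rw [uIoc_of_le zero_le_one] at hx
      have : 0 ≤ (1 - x) ^ (ν - 1) := rpow_nonneg (by linarith [hx.2]) _
      rw [norm_mul, Real.norm_eq_abs, Real.norm_of_nonneg this]
      exact mul_le_mul_of_nonneg_right (hM _ (mul_nonneg ht hx.1.le)) this
    · exact (sub_rpow_integrable _ 1 0 1 (by linarith)).const_mul _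
    · refine Eventually.of_forall fun x hx => ?_
      rw [uIoc_of_le zero_le_one] at hx
      exact (hL.comp (tendsto_id.atTop_mul_const hx.1)).mul_const _
  have e1 : ∫ x in (0:ℝ)..1, L * (1 - x) ^ (ν - 1) = L / ν := by
    rw [intervalIntegral.integral_const_mul,
      intervalIntegral.integral_comp_sub_left (fun x => x ^ (ν - 1)) 1,
      integral_rpow (Or.inl (by linarith))]
    simp [hν.ne']
    rfl
  rw [e1] at key
  refine key.congr' ?_
  filter_upwards [eventually_gt_atTop 0] with t ht
  have h := intervalIntegral.integral_comp_mul_left (a := 0) (b := 1) (fun u => g u * (t - u) ^ (ν - 1)) ht.ne'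
  simp only [mul_zero, mul_one, smul_eq_mul] at h
  have h2 : ∫ x in (0:ℝ)..1, g (t * x) * (t - t * x) ^ (ν - 1)
      = t ^ (ν - 1) * ∫ x in (0:ℝ)..1, g (t * x) * (1 - x) ^ (ν - 1) := by
    rw [← intervalIntegral.integral_const_mul]
    apply intervalIntegral.integral_congr
    intro x hx
    rw [uIcc_of_le zero_le_one] at hx
    simp only
    rw [show t - t * x = t * (1 - x) by ring, mul_rpow ht.le (by linarith [hx.2])]
    ring
  rw [h2] at h
  rw [rpow_sub_one ht.ne'] at h
  have := rpow_pos_of_pos ht ν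
  field_simp at h ⊢
  linarith

lemma fubini (ψ N : ℝ → ℝ) (hψ : Continuous ψ) (hN : Continuous N) (t ν : ℝ) (ht : 0 ≤ t) (hν : 0 < ν) :
    (∫ u in (0:ℝ)..t, (∫ s in (0:ℝ)..u, ψ s * N (u - s)) * (t - u) ^ (ν - 1)
    = ∫ v in (0:ℝ)..t, N v * ∫ s in (0:ℝ)..(t - v), ψ s * ((t - v) - s) ^ (ν - 1)) ∧
    IntervalIntegrable (fun v => N v * ∫ s in (0:ℝ)..(t - v), ψ s * ((t - v) - s) ^ (ν - 1))
      volume 0 t := by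
  let F : ℝ → ℝ → ℝ := fun u v => (if v ≤ u then ψ (u - v) * N v else 0) * (t - u) ^ (ν - 1)
  have hF : Integrable (Function.uncurry F)
      ((volume.restrict (Ioc 0 t)).prod (volume.restrict (Ioc 0 t))) := by
    have hi : Integrable (fun p : ℝ × ℝ => (t - p.1) ^ (ν - 1) * 1)
        ((volume.restrict (Ioc 0 t)).prod (volume.restrict (Ioc 0 t))) := by
      refine Integrable.mul_prod (f := fun u : ℝ => (t - u) ^ (ν - 1)) (g := fun _ : ℝ => (1:ℝ))
        ?_ (integrable_const (1:ℝ))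
      exact ((intervalIntegrable_iff_integrableOn_Ioc_of_le ht).1
        (sub_rpow_integrable (ν - 1) t 0 t (by linarith)))
    simp only [mul_one] at hi
    obtain ⟨C1, hC1⟩ := (isCompact_Icc (a := (0:ℝ)) (b := t)).exists_bound_of_continuousOn hψ.continuousOn
    obtain ⟨C2, hC2⟩ := (isCompact_Icc (a := (0:ℝ)) (b := t)).exists_bound_of_continuousOn hN.continuousOn
    refine hi.bdd_mul (c := C1 * C2)
      (f := fun p : ℝ × ℝ => if p.2 ≤ p.1 then ψ (p.1 - p.2) * N p.2 else 0) ?_ ?_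
    · refine Measurable.aestronglyMeasurable (Measurable.ite ?_ ?_ measurable_const)
      · exact measurableSet_le measurable_snd measurable_fst
      · exact (by fun_prop : Continuous _).measurable
    · rw [Measure.prod_restrict]
      refine (ae_restrict_iff' (measurableSet_Ioc.prod measurableSet_Ioc)).2
        (Eventually.of_forall fun p hp => ?_)
      obtain ⟨⟨h1, h2⟩, h3, h4⟩ := hp
      have hC10 := (norm_nonneg _).trans (hC1 0 ⟨le_rfl, ht⟩)
      have hC20 := (norm_nonneg _).trans (hC2 0 ⟨le_rfl, ht⟩)
      split_ifs with h
      · rw [norm_mul]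
        exact mul_le_mul (hC1 _ ⟨by linarith, by linarith⟩) (hC2 _ ⟨h3.le, h4⟩) (norm_nonneg _) hC10
      · simpa using mul_nonneg hC10 hC20
  have hk : EqOn (fun v => N v * ∫ s in (0:ℝ)..(t - v), ψ s * ((t - v) - s) ^ (ν - 1))
      (fun v => ∫ u, F u v ∂(volume.restrict (Ioc 0 t))) (Ioc 0 t) := by
    intro v hv
    simp only [F]
    have h1 := intervalIntegral.integral_comp_sub_right (a := v) (b := t)
      (fun s => ψ s * ((t - v) - s) ^ (ν - 1)) v
    simp only [sub_self, sub_sub_sub_cancel_right] at h1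
    rw [← h1, intervalIntegral.integral_of_le hv.2, ← MeasureTheory.integral_const_mul]
    have : ∀ u, (if v ≤ u then ψ (u - v) * N v else 0) * (t - u) ^ (ν - 1)
        = (Ici v).indicator (fun u => N v * (ψ (u - v) * (t - u) ^ (ν - 1))) u := by
      intro u; simp only [indicator, mem_Ici]; split_ifs <;> ring
    simp_rw [this]
    rw [setIntegral_indicator measurableSet_Ici, ← integral_Icc_eq_integral_Ioc]
    congr 2
    ext x; simp; constructor
    · intro h; exact ⟨⟨hv.1.trans_le h.1, h.2⟩, h.1⟩
    · exact fun h => ⟨h.2, h.1.2⟩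
  refine ⟨?_, ?_⟩
  swap
  · rw [intervalIntegrable_iff_integrableOn_Ioc_of_le ht]
    exact (integrableOn_congr_fun hk measurableSet_Ioc).2 hF.integral_prod_right
  have hs := integral_integral_swap hF
  rw [intervalIntegral.integral_of_le ht, intervalIntegral.integral_of_le ht]
  convert hs using 1
  · refine setIntegral_congr_fun measurableSet_Ioc fun u hu => ?_
    simp only [F]
    rw [MeasureTheory.integral_mul_const]
    congr 1
    have h1 := intervalIntegral.integral_comp_sub_left (a := 0) (b := u) (fun v => ψ (u - v) * N v) u
    simp only [sub_sub_cancel, sub_self, sub_zero] at h1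
    rw [h1, intervalIntegral.integral_of_le hu.1.le]
    have : ∀ v, (if v ≤ u then ψ (u - v) * N v else 0) = (Iic u).indicator (fun v => ψ (u - v) * N v) v := by
      intro v; simp [indicator]
    simp_rw [this]
    rw [setIntegral_indicator measurableSet_Iic]
    congr 2
    ext x; simp; intro _ h; exact h.trans hu.2
  · exact setIntegral_congr_fun measurableSet_Ioc hk

lemma kbound (ψ : ℝ → ℝ) (hψ : Continuous ψ) (Ψ α δ C ν : ℝ) (hδ : 0 < δ)
    (hα1 : 0 < 1 - α - δ) (hν : 0 < ν)
    (h : ∀ s, 0 < s → |ψ s - Ψ * s ^ (-α)| ≤ C * s ^ (-α - δ)) (r : ℝ) (hr : 0 < r) :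
    |(∫ s in (0:ℝ)..r, ψ s * (r - s) ^ (ν - 1)) - Ψ * ProbabilityTheory.beta (1 - α) ν * r ^ (ν - α)|
      ≤ C * ProbabilityTheory.beta (1 - α - δ) ν * r ^ (ν - α - δ) := by
  have e1 := beta_scaled (1 - α) ν r (by linarith) hν hr
  have i1 := beta_integrable (1 - α) ν r (by linarith) hν hr
  have e2 := beta_scaled (1 - α - δ) ν r hα1 hν hr
  have i2 := beta_integrable (1 - α - δ) ν r hα1 hν hr
  rw [show 1 - α + ν - 1 = ν - α by ring] at e1
  rw [show 1 - α - δ + ν - 1 = ν - α - δ by ring] at e2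
  rw [show 1 - α - 1 = -α by ring] at e1 i1
  rw [show 1 - α - δ - 1 = -α - δ by ring] at e2 i2
  have i0 : IntervalIntegrable (fun s => ψ s * (r - s) ^ (ν - 1)) volume 0 r :=
    (sub_rpow_integrable (ν - 1) r 0 r (by linarith)).continuousOn_mul hψ.continuousOn
  rw [show Ψ * ProbabilityTheory.beta (1 - α) ν * r ^ (ν - α)
      = ∫ s in (0:ℝ)..r, Ψ * (s ^ (-α) * (r - s) ^ (ν - 1)) by
        rw [intervalIntegral.integral_const_mul, e1]; ring,
    ← intervalIntegral.integral_sub i0 (i1.const_mul _),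
    show C * ProbabilityTheory.beta (1 - α - δ) ν * r ^ (ν - α - δ)
      = ∫ s in (0:ℝ)..r, C * (s ^ (-α - δ) * (r - s) ^ (ν - 1)) by
        rw [intervalIntegral.integral_const_mul, e2]; ring, ← Real.norm_eq_abs]
  refine intervalIntegral.norm_integral_le_of_norm_le hr.le ?_ (i2.const_mul _)
  refine Eventually.of_forall fun s hs => ?_
  have hp : 0 ≤ (r - s) ^ (ν - 1) := rpow_nonneg (by linarith [hs.2]) _
  rw [show ψ s * (r - s) ^ (ν - 1) - Ψ * (s ^ (-α) * (r - s) ^ (ν - 1))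
    = (ψ s - Ψ * s ^ (-α)) * (r - s) ^ (ν - 1) by ring, norm_mul, Real.norm_of_nonneg hp,
    ← mul_assoc]
  exact mul_le_mul_of_nonneg_right (h s hs.1) hp

lemma global_bound (ψ : ℝ → ℝ) (Ψ α δ : ℝ) (hΨ : 0 < Ψ) (hα : 0 < α) (hδ : 0 < δ)
    (h0 : ∀ s, 0 < s → 0 ≤ ψ s) (h1 : ∀ s, 0 < s → ψ s ≤ 1) 
    (h : ∃ C₀ K : ℝ, 0 < C₀ ∧ 0 < K ∧ ∀ t : ℝ, K ≤ t →
      |ψ t - Ψ * t ^ (-α)| ≤ C₀ * t ^ (-α - δ)) :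
    ∃ C, 0 ≤ C ∧ ∀ s, 0 < s → |ψ s - Ψ * s ^ (-α)| ≤ C * s ^ (-α - δ) := by
  obtain ⟨C₀, K, hC, hK, h⟩ := h
  have p1 := rpow_pos_of_pos hK (α + δ)
  have p2 := rpow_pos_of_pos hK δ
  refine ⟨C₀ + K ^ (α + δ) + Ψ * K ^ δ, by positivity, fun s hs => ?_⟩
  have p3 := rpow_pos_of_pos hs (-α - δ)
  have p4 := rpow_pos_of_pos hs (-α)
  have q1 : 0 ≤ K ^ (α + δ) * s ^ (-α - δ) := by positivity
  have q2 : 0 ≤ Ψ * (K ^ δ * s ^ (-α - δ)) := by positivity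
  have q3 : 0 ≤ C₀ * s ^ (-α - δ) := by positivity
  rcases le_total K s with hs1 | hs1
  · refine (h s hs1).trans ?_
    nlinarith
  · have a1 : 1 ≤ K ^ (α + δ) * s ^ (-α - δ) := by
      rw [show -α - δ = -(α + δ) by ring, rpow_neg hs.le, ← div_eq_mul_inv, one_le_div (rpow_pos_of_pos hs _)]
      exact rpow_le_rpow hs.le hs1 (by linarith)
    have a2 : s ^ (-α) ≤ K ^ δ * s ^ (-α - δ) := by
      rw [rpow_sub hs, mul_div_assoc', le_div_iff₀ (rpow_pos_of_pos hs _), mul_comm]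
      exact mul_le_mul_of_nonneg_right (rpow_le_rpow hs.le hs1 hδ.le) p4.le
    have a3 : Ψ * s ^ (-α) ≤ Ψ * (K ^ δ * s ^ (-α - δ)) := mul_le_mul_of_nonneg_left a2 hΨ.le
    have := h0 s hs
    have := h1 s hs
    have : 0 ≤ Ψ * s ^ (-α) := by positivity
    rw [abs_le]
    constructor <;> nlinarith

lemma lower_bound (ψ : ℝ → ℝ) (hc : Continuous ψ) (Ψ α δ C : ℝ) (hΨ : 0 < Ψ) (hα : 0 < α) (hδ : 0 < δ)
    (h0 : ∀ s, 0 < ψ s) 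
    (h : ∀ s, 0 < s → |ψ s - Ψ * s ^ (-α)| ≤ C * s ^ (-α - δ)) :
    ∃ D, 0 ≤ D ∧ ∀ s, 1 ≤ s → s ^ (-α) ≤ D * ψ s := by
  have hlim : Tendsto (fun s : ℝ => C * s ^ (-δ)) atTop (nhds (C * 0)) :=
    (tendsto_rpow_neg_atTop hδ).const_mul C
  rw [mul_zero] at hlim
  obtain ⟨T, hT⟩ := eventually_atTop.1 (hlim.eventually (gt_mem_nhds (half_pos hΨ)))
  obtain ⟨m, hm, hmin⟩ : ∃ m, 0 < m ∧ ∀ s ∈ Icc 1 T, m ≤ ψ s := by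
    rcases le_total 1 T with h1 | h1
    · obtain ⟨x, hx, hxm⟩ := (isCompact_Icc (a := (1:ℝ)) (b := T)).exists_isMinOn
        ⟨1, le_rfl, h1⟩ hc.continuousOn
      exact ⟨ψ x, h0 x, fun s hs => hxm hs⟩
    · refine ⟨ψ 1, h0 1, fun s hs => ?_⟩
      rw [show s = 1 by linarith [hs.1, hs.2]]
  refine ⟨2 / Ψ + 1 / m, by positivity, fun s hs => ?_⟩
  have hs0 : 0 < s := by linarith
  rw [add_mul]
  have b1 : 0 ≤ 2 / Ψ * ψ s := mul_nonneg (by positivity) (h0 s).le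
  have b2 : 0 ≤ 1 / m * ψ s := mul_nonneg (by positivity) (h0 s).le
  rcases le_total s T with h1 | h1
  · have : s ^ (-α) ≤ 1 := rpow_le_one_of_one_le_of_nonpos hs (by linarith)
    have : 1 ≤ 1 / m * ψ s := by
      rw [one_div, inv_mul_eq_div, one_le_div hm]; exact hmin s ⟨hs, h1⟩
    linarith
  · have h2 := (abs_le.1 (h s hs0)).1
    have h3 := hT s h1
    have p := rpow_pos_of_pos hs0 (-α)
    have h4 : C * s ^ (-α - δ) ≤ Ψ / 2 * s ^ (-α) := by
      rw [show -α - δ = -δ + -α by ring, rpow_add hs0, ← mul_assoc]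
      exact mul_le_mul_of_nonneg_right h3.le p.le
    have : s ^ (-α) ≤ 2 / Ψ * ψ s := by
      rw [div_mul_eq_mul_div, le_div_iff₀ hΨ]
      linarith
    linarith

lemma small (ψ N : ℝ → ℝ) (hψ : Continuous ψ) (hN : Continuous N) (α D B G κ ν : ℝ) (hD : 0 ≤ D)
    (hψ0 : ∀ s, 0 < ψ s) (hN0 : ∀ s, 0 ≤ N s) (hB : ∀ s, N s ≤ B)
    (hlow : ∀ s, 1 ≤ s → s ^ (-α) ≤ D * ψ s) (hκ : -1 < κ) (hν : 0 < ν) (hκν : κ + α < ν)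
    (hG : ∀ᶠ t in atTop, ∫ s in (0:ℝ)..t, ψ s * N (t - s) ≤ G) :
    Tendsto (fun t => (∫ v in (0:ℝ)..t, N v * (t - v) ^ κ) / t ^ ν) atTop (nhds 0) := by
  have hB0 : 0 ≤ B := (hN0 0).trans (hB 0)
  have hup : Tendsto (fun t : ℝ => (B * ∫ s in (0:ℝ)..1, s ^ κ) * t ^ (-ν)
      + (D * G) * (t ^ (-ν) + t ^ (-(ν - (κ + α))))) atTop
      (nhds ((B * ∫ s in (0:ℝ)..1, s ^ κ) * 0 + (D * G) * (0 + 0))) :=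
    ((tendsto_rpow_neg_atTop hν).const_mul _).add
      (((tendsto_rpow_neg_atTop hν).add (tendsto_rpow_neg_atTop (by linarith))).const_mul _)
  simp only [mul_zero, add_zero] at hup
  refine squeeze_zero' ?_ ?_ hup
  · filter_upwards [eventually_ge_atTop 0] with t ht
    refine div_nonneg (intervalIntegral.integral_nonneg ht fun v hv => ?_) (rpow_nonneg ht _)
    exact mul_nonneg (hN0 v) (rpow_nonneg (by linarith [hv.2]) _)
  · filter_upwards [eventually_ge_atTop 1, hG] with t ht hGt
    have ht0 : 0 < t := by linarith
    have hsub := intervalIntegral.integral_comp_sub_left (a := 0) (b := t) (fun v => N v * (t - v) ^ κ) t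
    simp only [sub_sub_cancel, sub_self, sub_zero] at hsub
    have hNt : Continuous fun s => N (t - s) := by fun_prop
    have hi : ∀ a b : ℝ, IntervalIntegrable (fun s => N (t - s) * s ^ κ) volume a b := fun a b =>
      (intervalIntegral.intervalIntegrable_rpow' hκ).continuousOn_mul hNt.continuousOn
    have hi2 : ∀ a b : ℝ, IntervalIntegrable (fun s => ψ s * N (t - s)) volume a b := fun a b =>
      (hψ.mul hNt).intervalIntegrable a b
    rw [← hsub, ← intervalIntegral.integral_add_adjacent_intervals (hi 0 1) (hi 1 t)]
    have s1 : ∫ s in (0:ℝ)..1, N (t - s) * s ^ κ ≤ B * ∫ s in (0:ℝ)..1, s ^ κ := by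
      rw [← intervalIntegral.integral_const_mul]
      refine intervalIntegral.integral_mono_on zero_le_one (hi 0 1)
        ((intervalIntegral.intervalIntegrable_rpow' hκ).const_mul _) fun s hs => ?_
      exact mul_le_mul_of_nonneg_right (hB _) (rpow_nonneg hs.1 _)
    have s2 : ∫ s in (1:ℝ)..t, N (t - s) * s ^ κ ≤
        (D * (1 + t ^ (κ + α))) * ∫ s in (1:ℝ)..t, ψ s * N (t - s) := by
      rw [← intervalIntegral.integral_const_mul]
      refine intervalIntegral.integral_mono_on ht (hi 1 t) ((hi2 1 t).const_mul _) fun s hs => ?_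
      have hs0 : 0 < s := by linarith [hs.1]
      have h1 : s ^ κ ≤ (1 + t ^ (κ + α)) * s ^ (-α) := by
        rw [show κ = (κ + α) + -α by ring, rpow_add hs0, show κ + α + -α + α = κ + α by ring]
        refine mul_le_mul_of_nonneg_right ?_ (rpow_nonneg hs0.le _)
        rcases le_total (κ + α) 0 with h | h
        · have := rpow_le_one_of_one_le_of_nonpos hs.1 h
          have := rpow_nonneg ht0.le (κ + α)
          linarith
        · have := rpow_le_rpow hs0.le hs.2 h
          linarith
      have h2 : (1 + t ^ (κ + α)) * s ^ (-α) ≤ (1 + t ^ (κ + α)) * (D * ψ s) :=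
        mul_le_mul_of_nonneg_left (hlow s hs.1) (by have := rpow_nonneg ht0.le (κ + α); linarith)
      calc _ ≤ N (t - s) * ((1 + t ^ (κ + α)) * (D * ψ s)) :=
            mul_le_mul_of_nonneg_left (h1.trans h2) (hN0 _)
        _ = _ := by ring
    have s3 : ∫ s in (1:ℝ)..t, ψ s * N (t - s) ≤ G := by
      have := intervalIntegral.integral_add_adjacent_intervals (hi2 0 1) (hi2 1 t)
      have h0 : 0 ≤ ∫ s in (0:ℝ)..1, ψ s * N (t - s) :=
        intervalIntegral.integral_nonneg zero_le_one fun s _ => mul_nonneg (hψ0 s).le (hN0 _)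
      linarith
    have p := rpow_nonneg ht0.le (κ + α)
    have s4 := s2.trans (mul_le_mul_of_nonneg_left s3 (by positivity : 0 ≤ D * (1 + t ^ (κ + α))))
    have pν := rpow_pos_of_pos ht0 ν
    calc _ ≤ (B * (∫ s in (0:ℝ)..1, s ^ κ) + D * (1 + t ^ (κ + α)) * G) / t ^ ν := by
          gcongr
      _ = _ := by
          rw [show -(ν - (κ + α)) = (κ + α) - ν by ring, rpow_sub ht0, rpow_neg ht0.le]
          field_simp

theorem conv_N_Y_asymptotics (β : ℝ → ℝ)
    (hβc : Continuous β) (hβ0 : ∀ a, 0 ≤ β a) (hβb : ∃ C, ∀ a, β a ≤ C)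
    (ψ : ℝ → ℝ) (hψ : ∀ t, ψ t = Real.exp (-∫ s in (0:ℝ)..t, β s))
    (Ψ α δ : ℝ)
    (hΨ : 0 < Ψ) (hα : 0 < α) (hα1 : α < 1) (hδ : 0 < δ) (hδ1 : δ < 1 - α)
    (hψasym : ∃ C₀ K : ℝ, 0 < C₀ ∧ 0 < K ∧ ∀ t : ℝ, K ≤ t →
      |ψ t - Ψ * t ^ (-α)| ≤ C₀ * t ^ (-α - δ))
    (N : ℝ → ℝ) (hNc : Continuous N) (hN0 : ∀ t, 0 ≤ N t)
    (hNb : ∃ B, ∀ t, N t ≤ B)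
    (L : ℝ) (hL : 0 ≤ L)
    (hconv : Tendsto (fun t => ∫ s in (0:ℝ)..t, ψ s * N (t - s)) atTop (nhds L)) :
    ∀ μ : ℝ, 1 - α < μ →
      Tendsto (fun t => (∫ s in (0:ℝ)..t, N s * Y μ (t - s)) / Y (μ + α) t)
        atTop (nhds (L / (Ψ * Real.Gamma (1 - α)))) := by
  intro μ hμ
  obtain ⟨ν, hνdef⟩ : ∃ ν, ν = μ + α - 1 := ⟨_, rfl⟩
  have hν : 0 < ν := by linarith
  have hμ0 : 0 < μ := by linarith
  have hψc : Continuous ψ := by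
    rw [funext hψ]
    exact Real.continuous_exp.comp
      (intervalIntegral.continuous_primitive (fun a b => hβc.intervalIntegrable a b) 0).neg
  have hψ0 : ∀ s, 0 < ψ s := fun s => by rw [hψ]; exact Real.exp_pos _
  have hψ1 : ∀ s, 0 < s → ψ s ≤ 1 := fun s hs => by
    rw [hψ, Real.exp_le_one_iff, neg_nonpos]
    exact intervalIntegral.integral_nonneg hs.le fun a _ => hβ0 a
  obtain ⟨B, hB⟩ := hNb
  obtain ⟨C, hC0, hC⟩ := global_bound ψ Ψ α δ hΨ hα hδ (fun s _ => (hψ0 s).le) hψ1 hψasym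
  obtain ⟨D, hD, hlow⟩ := lower_bound ψ hψc Ψ α δ C hΨ hα hδ hψ0 hC
  have hG : ∀ᶠ t in atTop, ∫ s in (0:ℝ)..t, ψ s * N (t - s) ≤ L + 1 :=
    (hconv.eventually (gt_mem_nhds (show L < L + 1 by linarith))).mono fun t h => h.le
  have hsmall := small ψ N hψc hNc α D B (L + 1) (ν - α - δ) ν hD hψ0 hN0 hB hlow
    (by linarith) hν (by linarith) hG
  have hgc : Continuous fun t => ∫ s in (0:ℝ)..t, ψ s * N (t - s) :=
    intervalIntegral.continuous_parametric_intervalIntegral_of_continuous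
      (f := fun t s => ψ s * N (t - s)) (by fun_prop) continuous_id
  have hT1 := T1 _ hgc L hconv ν hν
  obtain ⟨b, hb⟩ : ∃ b, b = ProbabilityTheory.beta (1 - α) ν := ⟨_, rfl⟩
  obtain ⟨c, hc⟩ : ∃ c, c = C * ProbabilityTheory.beta (1 - α - δ) ν := ⟨_, rfl⟩
  have hbpos : 0 < b := hb ▸ ProbabilityTheory.beta_pos (by linarith) hν
  have hdiff : Tendsto (fun t =>
      (∫ u in (0:ℝ)..t, (∫ s in (0:ℝ)..u, ψ s * N (u - s)) * (t - u) ^ (ν - 1)) / t ^ ν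
      - Ψ * b * ((∫ v in (0:ℝ)..t, N v * (t - v) ^ (ν - α)) / t ^ ν)) atTop (nhds 0) := by
    have h0 := hsmall.const_mul c
    rw [mul_zero] at h0
    refine squeeze_zero_norm' ?_ h0
    filter_upwards [eventually_gt_atTop 0] with t ht
    obtain ⟨hf, hfi⟩ := fubini ψ N hψc hNc t ν ht.le hν
    have i1 : IntervalIntegrable (fun v => N v * (t - v) ^ (ν - α)) volume 0 t :=
      (sub_rpow_integrable (ν - α) t 0 t (by linarith)).continuousOn_mul hNc.continuousOn
    have i2 : IntervalIntegrable (fun v => N v * (t - v) ^ (ν - α - δ)) volume 0 t :=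
      (sub_rpow_integrable (ν - α - δ) t 0 t (by linarith)).continuousOn_mul hNc.continuousOn
    have pν := rpow_pos_of_pos ht ν
    rw [hf, mul_div_assoc', ← sub_div, norm_div, Real.norm_of_nonneg pν.le, mul_div_assoc']
    refine div_le_div_of_nonneg_right ?_ pν.le
    rw [← intervalIntegral.integral_const_mul, ← intervalIntegral.integral_const_mul,
      ← intervalIntegral.integral_sub hfi (i1.const_mul _)]
    refine intervalIntegral.norm_integral_le_of_norm_le ht.le ?_ (i2.const_mul _)
    have hne : ∀ᵐ v : ℝ, v ≠ t := by simp [ae_iff]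
    filter_upwards [hne] with v hvt hv
    have hr : 0 < t - v := sub_pos.2 (lt_of_le_of_ne hv.2 hvt)
    have hk := kbound ψ hψc Ψ α δ C ν hδ (by linarith) hν hC (t - v) hr
    rw [← hb, ← hc] at hk
    calc _ = N v * |(∫ s in (0:ℝ)..(t - v), ψ s * ((t - v) - s) ^ (ν - 1))
          - Ψ * b * (t - v) ^ (ν - α)| := by
          rw [← abs_of_nonneg (hN0 v), ← abs_mul, abs_of_nonneg (hN0 v), Real.norm_eq_abs]
          congr 1; ring
      _ ≤ N v * (c * (t - v) ^ (ν - α - δ)) := mul_le_mul_of_nonneg_left hk (hN0 v)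
      _ = _ := by ring
  have hfin := ((hT1.sub hdiff).const_mul (1 / (Ψ * b))).mul_const (Real.Gamma (μ + α) / Real.Gamma μ)
  have hΓμ := Real.Gamma_pos_of_pos hμ0
  have hΓν := Real.Gamma_pos_of_pos hν
  have hΓα := Real.Gamma_pos_of_pos (show 0 < 1 - α by linarith)
  have hΓμα := Real.Gamma_pos_of_pos (show 0 < μ + α by linarith)
  have hlim : 1 / (Ψ * b) * (L / ν - 0) * (Real.Gamma (μ + α) / Real.Gamma μ)
      = L / (Ψ * Real.Gamma (1 - α)) := by
    have e : Real.Gamma (μ + α) = ν * Real.Gamma ν := by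
      rw [← Real.Gamma_add_one hν.ne']; congr 1; linarith
    rw [e, hb, ProbabilityTheory.beta, show 1 - α + ν = μ by linarith]
    field_simp
    ring
  rw [hlim] at hfin
  refine hfin.congr' ?_
  filter_upwards [eventually_gt_atTop 0] with t ht
  have pν := rpow_pos_of_pos ht ν
  have e : ∫ s in (0:ℝ)..t, N s * Y μ (t - s)
      = (∫ v in (0:ℝ)..t, N v * (t - v) ^ (ν - α)) / Real.Gamma μ := by
    rw [← intervalIntegral.integral_div]
    refine intervalIntegral.integral_congr fun s _ => ?_
    simp only [Y]
    rw [show ν - α = μ - 1 by linarith, mul_div_assoc]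
  rw [e, Y, show μ + α - 1 = ν from hνdef.symm]
  field_simp
  ring
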